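/- arXiv:2210.06000 — 2 statements merged into one kernel-verified Lean document; each statement's English description precedes it below -/
import Mathlib

section
/- Let G be a 2-connected graph with n ≥ 3 vertices. Then for every m ≥ 3, the number of proper m-colorings of G satisfies P(G,m) ≤ (m-1)^n + (-1)^n (m-1). -/
open SimpleGraph

/-- The number of proper `m`-colorings of a graph `G`. -/
noncomputable def numColorings {V : Type} (G : SimpleGraph V) (m : ℕ) : ℕ :=
  Nat.card {c : V → Fin m // ∀ ⦃a b : V⦄, G.Adj a b → c a ≠ c b}

/-- An `m`-fold cover `(L, H)` of a graph `G`. -/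
structure DPCover {V : Type} (G : SimpleGraph V) (m : ℕ) where
  X : Type
  H : SimpleGraph X
  L : V → Set X
  partition : ∀ x : X, ∃! v : V, x ∈ L v
  fold : ∀ v : V, Nat.card (L v) = m
  cliques : ∀ v : V, ∀ x ∈ L v, ∀ y ∈ L v, x ≠ y → H.Adj x y
  cross : ∀ u v : V, ∀ x ∈ L u, ∀ y ∈ L v, H.Adj x y → u = v ∨ G.Adj u v
  matching : ∀ u v : V, G.Adj u v → ∀ x ∈ L u, ∀ y ∈ L v, ∀ z ∈ L v,
      H.Adj x y → H.Adj x z → y = z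
  matching' : ∀ u v : V, G.Adj u v → ∀ y ∈ L u, ∀ z ∈ L u, ∀ x ∈ L v,
      H.Adj y x → H.Adj z x → y = z

/-- A cover is full if for each edge `uv` of `G` the matching between `L u` and `L v`
is a perfect matching. -/
def DPCover.IsFull {V : Type} {G : SimpleGraph V} {m : ℕ} (C : DPCover G m) : Prop :=
  ∀ u v : V, G.Adj u v → ∀ x ∈ C.L u, ∃ y ∈ C.L v, C.H.Adj x y

/-- An `H`-coloring of `G`, viewed as an independent transversal of the lists. -/
def DPCover.IsColoring {V : Type} {G : SimpleGraph V} {m : ℕ} (C : DPCover G m)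
    (f : V → C.X) : Prop :=
  (∀ v : V, f v ∈ C.L v) ∧ ∀ u v : V, u ≠ v → ¬ C.H.Adj (f u) (f v)

/-- `P_DP(G, 𝓗)`, the number of `𝓗`-colorings of `G`. -/
noncomputable def DPCover.count {V : Type} {G : SimpleGraph V} {m : ℕ}
    (C : DPCover G m) : ℕ :=
  Nat.card {f : V → C.X // C.IsColoring f}

/-- The DP color function `P_DP(G, m)`. -/
noncomputable def PDP {V : Type} (G : SimpleGraph V) (m : ℕ) : ℕ :=
  sInf {n : ℕ | ∃ C : DPCover G m, C.count = n}

/-- The DP-chromatic number `χ_DP(G)`. -/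
noncomputable def chiDP {V : Type} (G : SimpleGraph V) : ℕ :=
  sInf {m : ℕ | ∀ C : DPCover G m, ∃ f : V → C.X, C.IsColoring f}

/-- A canonical labeling of an `m`-fold cover. -/
def DPCover.HasCanonicalLabeling {V : Type} {G : SimpleGraph V} {m : ℕ}
    (C : DPCover G m) : Prop :=
  ∃ φ : V × Fin m → C.X, Function.Bijective φ ∧ (∀ v j, φ (v, j) ∈ C.L v) ∧
    ∀ u v : V, G.Adj u v → ∀ j : Fin m, C.H.Adj (φ (u, j)) (φ (v, j))

/-- A graph is 2-connected if it has at least 3 vertices, is connected, and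
remains connected after deleting any single vertex. -/
def TwoConnected {V : Type} (G : SimpleGraph V) : Prop :=
  3 ≤ Nat.card V ∧ G.Connected ∧ ∀ v : V, (G.induce ({v}ᶜ : Set V)).Connected


namespace Ear
open Finset Classical

variable {V : Type} [Fintype V]

/-- colorings proper on `S`, zero outside `S` -/
noncomputable def C (G : SimpleGraph V) (q : ℕ) (S : Finset V) : Finset (V → Fin (q+1)) :=
  Finset.univ.filter (fun c => (∀ a ∈ S, ∀ b ∈ S, G.Adj a b → c a ≠ c b) ∧ ∀ a, a ∉ S → c a = 0)

noncomputable def W (q : ℕ) : ℕ → Fin (q+1) → Fin (q+1) → ℕ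
  | 0, a, b => if a = b then 1 else 0
  | (k+1), a, b => ∑ x ∈ Finset.univ.filter (fun x => x ≠ a), W q k x b

def Conn (G : SimpleGraph V) (S : Finset V) : Prop :=
  ∀ T ⊆ S, T.Nonempty → T ≠ S → ∃ a ∈ T, ∃ b ∈ S, b ∉ T ∧ G.Adj a b

noncomputable def F (G : SimpleGraph V) (q k : ℕ) (S : Finset V) (u v : V) : ℕ :=
  ∑ c ∈ C G q S, W q k (c u) (c v)

lemma step (G : SimpleGraph V) (q : ℕ) (S : Finset V) (u w : V) (hu : u ∈ S) (hw : w ∉ S)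
    (h : G.Adj u w) (f : (V → Fin (q+1)) → ℕ) :
    ∑ c ∈ C G q (insert w S), f c ≤
    ∑ c ∈ C G q S, ∑ x ∈ Finset.univ.filter (fun x => x ≠ c u), f (Function.update c w x) := by
  rw [Finset.sum_sigma']
  have hinj : ∀ c : V → Fin (q+1), Function.update (Function.update c w 0) w (c w) = c := by
    intro c; simp
  let e : (V → Fin (q+1)) → (Σ _ : V → Fin (q+1), Fin (q+1)) :=
    fun c => ⟨Function.update c w 0, c w⟩
  have he : Function.Injective e := by
    intro c d hcd
    have h1 : Function.update c w 0 = Function.update d w 0 := congrArg Sigma.fst hcd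
    have h2 : c w = d w := by
      have := congrArg (fun z : (Σ _ : V → Fin (q+1), Fin (q+1)) => z.2) hcd
      exact this
    rw [← hinj c, ← hinj d, h1, h2]
  calc ∑ c ∈ C G q (insert w S), f c
      = ∑ c ∈ C G q (insert w S), (fun z : (Σ _ : V → Fin (q+1), Fin (q+1)) =>
          f (Function.update z.1 w z.2)) (e c) := by
        refine Finset.sum_congr rfl fun c _ => ?_
        simp [e]
    _ = ∑ z ∈ (C G q (insert w S)).image e, f (Function.update z.1 w z.2) := by
        rw [Finset.sum_image (fun a _ b _ hab => he hab)]
    _ ≤ _ := by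
        apply Finset.sum_le_sum_of_subset
        intro z hz
        obtain ⟨c, hc, rfl⟩ := Finset.mem_image.1 hz
        simp only [C, Finset.mem_filter, Finset.mem_univ, true_and, Finset.mem_insert] at hc
        obtain ⟨h1, h2⟩ := hc
        have huw : u ≠ w := fun h => hw (h ▸ hu)
        simp only [Finset.mem_sigma, C, Finset.mem_filter, Finset.mem_univ, true_and, e]
        refine ⟨⟨?_, ?_⟩, ?_⟩
        · intro a ha b hb hab
          have : a ≠ w := fun h => hw (h ▸ ha)
          have : b ≠ w := fun h => hw (h ▸ hb)
          simp only [Function.update_of_ne, ne_eq, *, not_false_eq_true]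
          exact h1 a (Or.inr ha) b (Or.inr hb) hab
        · intro a ha
          by_cases haw : a = w
          · subst haw; simp
          · rw [Function.update_of_ne haw]
            exact h2 a (by tauto)
        · rw [Function.update_of_ne huw]
          exact (h1 u (Or.inr hu) w (Or.inl rfl) h).symm

lemma F_step (G : SimpleGraph V) (q k : ℕ) (S : Finset V) (u v w : V) (hu : u ∈ S) (hw : w ∉ S)
    (hv : v ∈ S) (h : G.Adj u w) : F G q k (insert w S) w v ≤ F G q (k+1) S u v := by
  unfold F
  refine (step G q S u w hu hw h (fun c => W q k (c w) (c v))).trans (le_of_eq ?_)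
  have hvw : v ≠ w := fun h => hw (h ▸ hv)
  simp [W, Function.update_of_ne hvw]

lemma W_formula (q k : ℕ) (a b : Fin (q+1)) :
    ((q:ℤ)+1) * W q k a b = (q:ℤ)^k - (-1)^k + (-1)^k * (q+1) * (if a = b then 1 else 0) := by
  induction k generalizing a with
  | zero => simp [W]
  | succ k ih =>
    have hcard : ((Finset.univ.filter (fun x : Fin (q+1) => x ≠ a)).card : ℤ) = q := by
      rw [Finset.filter_ne']; simp
    have hs : ∑ x ∈ Finset.univ.filter (fun x : Fin (q+1) => x ≠ a),
        (if x = b then (1:ℤ) else 0) = 1 - (if a = b then 1 else 0) := by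
      rw [Finset.sum_ite_eq']
      by_cases hab : a = b
      · subst hab; simp
      · simp [hab, Ne.symm hab]
    simp only [W]
    push_cast
    rw [Finset.mul_sum, Finset.sum_congr rfl (fun x _ => ih x), Finset.sum_add_distrib,
      ← Finset.mul_sum, hs, Finset.sum_const, nsmul_eq_mul, hcard]
    ring

lemma W_one (q : ℕ) (a b : Fin (q+1)) (hab : a ≠ b) : 1 ≤ W q 1 a b := by
  have := W_formula q 1 a b
  simp only [hab, if_false] at this
  by_contra h
  have h0 : W q 1 a b = 0 := by omega
  rw [h0] at this
  push_cast at this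
  linarith [(Nat.cast_nonneg q : (0:ℤ) ≤ q)]

/-- number of colorings with `u`,`v` the same color -/
noncomputable def E (G : SimpleGraph V) (q : ℕ) (S : Finset V) (u v : V) : ℕ :=
  ∑ c ∈ C G q S, if c u = c v then 1 else 0

lemma F_formula (G : SimpleGraph V) (q k : ℕ) (S : Finset V) (u v : V) :
    ((q:ℤ)+1) * F G q k S u v = (C G q S).card * ((q:ℤ)^k - (-1)^k)
      + (-1)^k * (q+1) * E G q S u v := by
  unfold F E
  push_cast
  rw [Finset.mul_sum, Finset.sum_congr rfl (fun c _ => W_formula q k (c u) (c v)),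
    Finset.sum_add_distrib, ← Finset.mul_sum, Finset.sum_const, nsmul_eq_mul]

lemma conn_insert (G : SimpleGraph V) (S : Finset V) (u w : V) (hu : u ∈ S)
    (h : G.Adj u w) (hS : Conn G S) : Conn G (insert w S) := by
  intro T hT hne hTS
  by_cases h1 : S ⊆ T
  · have hwT : w ∉ T := by
      intro hw
      exact hTS (Finset.Subset.antisymm hT (Finset.insert_subset hw h1))
    exact ⟨u, h1 hu, w, Finset.mem_insert_self _ _, hwT, h⟩
  · by_cases h2 : (T ∩ S).Nonempty
    · obtain ⟨a, ha, b, hb, hbT, hab⟩ := hS (T ∩ S) Finset.inter_subset_right h2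
        (fun h => h1 (Finset.inter_eq_right.1 h))
      exact ⟨a, (Finset.mem_inter.1 ha).1, b, Finset.mem_insert_of_mem hb,
        fun hh => hbT (Finset.mem_inter.2 ⟨hh, hb⟩), hab⟩
    · rw [Finset.not_nonempty_iff_eq_empty] at h2
      obtain ⟨x, hx⟩ := hne
      have hxS : ∀ y ∈ T, y ∉ S := fun y hy hyS => by
        have : y ∈ T ∩ S := Finset.mem_inter.2 ⟨hy, hyS⟩
        rw [h2] at this; simp at this
      have hxw : x = w := by
        rcases Finset.mem_insert.1 (hT hx) with h | h
        · exact h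
        · exact absurd h (hxS x hx)
      subst hxw
      exact ⟨x, hx, u, Finset.mem_insert_of_mem hu, fun hh => hxS u hh hu, h.symm⟩

lemma E_step (G : SimpleGraph V) (q : ℕ) (S : Finset V) (u v a w : V) (ha : a ∈ S) (hw : w ∉ S)
    (hu : u ∈ S) (hv : v ∈ S) (h : G.Adj a w) : E G q (insert w S) u v ≤ q * E G q S u v := by
  unfold E
  refine (step G q S a w ha hw h (fun c => if c u = c v then 1 else 0)).trans (le_of_eq ?_)
  have hvw : v ≠ w := fun h => hw (h ▸ hv)
  have huw : u ≠ w := fun h => hw (h ▸ hu)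
  have hcard : ∀ a, ((Finset.univ.filter (fun x : Fin (q+1) => x ≠ a)).card) = q := by
      intro a; rw [Finset.filter_ne']; simp
  simp only [Function.update_of_ne hvw, Function.update_of_ne huw, Finset.sum_const, hcard,
    smul_eq_mul, Finset.mul_sum]

lemma E_pair (G : SimpleGraph V) (q : ℕ) (u v : V) : E G q {u, v} u v ≤ q + 1 := by
  unfold E
  rw [← Finset.sum_filter, Finset.sum_const, smul_eq_mul, mul_one]
  calc _ ≤ (Finset.univ : Finset (Fin (q+1))).card := by
        apply Finset.card_le_card_of_injOn (fun c => c u) (by simp)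
        intro c hc d hd hcd
        simp only [C, Finset.coe_filter, Set.mem_ofPred_eq, Finset.mem_filter, Finset.mem_insert,
          Finset.mem_singleton, not_or] at hc hd
        simp only at hcd
        funext x
        by_cases hx : x = u
        · rw [hx, hcd]
        · by_cases hx' : x = v
          · rw [hx', ← hc.2, ← hd.2, hcd]
          · rw [hc.1.2.2 x ⟨hx, hx'⟩, hd.1.2.2 x ⟨hx, hx'⟩]
    _ = q + 1 := by simp

lemma E_bound (G : SimpleGraph V) (q : ℕ) (S : Finset V) (u v : V) (huv : u ≠ v) (hu : u ∈ S)
    (hv : v ∈ S) (hS : Conn G S) :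
    ∀ j, j + 2 ≤ S.card → ∃ T ⊆ S, u ∈ T ∧ v ∈ T ∧ T.card = j + 2 ∧
      E G q T u v ≤ (q + 1) * q ^ j := by
  intro j
  induction j with
  | zero =>
    intro _
    refine ⟨{u, v}, ?_, by simp, by simp, Finset.card_pair huv, by simpa using E_pair G q u v⟩
    intro x hx
    simp only [Finset.mem_insert, Finset.mem_singleton] at hx
    rcases hx with rfl | rfl <;> assumption
  | succ j ih =>
    intro hj
    obtain ⟨T, hT, huT, hvT, hc, hE⟩ := ih (by omega)
    obtain ⟨a, ha, b, hb, hbT, hab⟩ := hS T hT ⟨u, huT⟩ (fun h => by rw [h] at hc; omega)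
    refine ⟨insert b T, Finset.insert_subset hb hT, Finset.mem_insert_of_mem huT,
      Finset.mem_insert_of_mem hvT, by rw [Finset.card_insert_of_notMem hbT]; omega, ?_⟩
    refine (E_step G q T u v a b ha hbT huT hvT hab).trans ?_
    calc q * E G q T u v ≤ q * ((q+1) * q^j) := Nat.mul_le_mul_left _ hE
      _ = _ := by ring

lemma E_le (G : SimpleGraph V) (q : ℕ) (S : Finset V) (u v : V) (huv : u ≠ v) (hu : u ∈ S)
    (hv : v ∈ S) (hS : Conn G S) (j : ℕ) (hj : S.card = j + 2) :
    E G q S u v ≤ (q + 1) * q ^ j := by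
  obtain ⟨T, hT, _, _, hc, hE⟩ := E_bound G q S u v huv hu hv hS j hj.ge
  rwa [Finset.eq_of_subset_of_card_le hT (by omega)] at hE

lemma E_zero (G : SimpleGraph V) (q : ℕ) (S : Finset V) (u v : V) (huv : u ≠ v) (hu : u ∈ S)
    (hv : v ∈ S) (hS : Conn G S) (hc : S.card = 2) : E G q S u v = 0 := by
  have hS2 : ({u, v} : Finset V) = S := by
    apply Finset.eq_of_subset_of_card_le
    · intro x hx
      simp only [Finset.mem_insert, Finset.mem_singleton] at hx
      rcases hx with rfl | rfl <;> assumption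
    · rw [Finset.card_pair huv, hc]
  obtain ⟨a, ha, b, hb, hba, hab⟩ := hS {u} (by simpa using hu) (by simp)
    (fun h => by rw [← h] at hc; simp at hc)
  rw [Finset.mem_singleton] at ha hba
  subst ha
  rw [← hS2] at hb
  have : b = v := by simpa [hba] using hb
  subst this
  unfold E
  apply Finset.sum_eq_zero
  intro c hcc
  simp only [C, Finset.mem_filter] at hcc
  simp [hcc.2.1 a hu b hv hab]

lemma ear (G : SimpleGraph V) (q : ℕ) (S : Finset V) (u : V) {a b : V} (p : G.Walk a b)
    (hp : p.IsPath) (hb : b ∈ S) (hup : u ∉ p.support) :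
    ∀ T : Finset V, S ⊆ T → a ∈ T → a ∉ S → Conn G T → (∀ x ∈ p.support, x ∈ T → x ∈ S ∨ x = a) →
    ∃ T' : Finset V, ∃ v ∈ S, v ≠ u ∧ ∃ k, T'.card = T.card + k ∧ Conn G T' ∧
      (C G q T').card ≤ F G q (k+1) T a v := by
  induction p with
  | nil => intro T _ _ h; exact absurd hb h
  | @cons a a' b hadj p ih =>
    intro T hST haT haS hconn hsup
    rw [Walk.cons_isPath_iff] at hp
    simp only [Walk.support_cons, List.mem_cons, not_or] at hup hsup
    by_cases ha' : a' ∈ S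
    · refine ⟨T, a', ha', ?_, 0, rfl, hconn, ?_⟩
      · rintro rfl; exact hup.2 p.start_mem_support
      · unfold F
        rw [Finset.card_eq_sum_ones]
        apply Finset.sum_le_sum
        intro c hc
        simp only [C, Finset.mem_filter] at hc
        exact W_one _ _ _ (hc.2.1 a haT a' (hST ha') hadj)
    · have ha'T : a' ∉ T := by
        intro h
        rcases hsup a' (Or.inr p.start_mem_support) h with h | h
        · exact ha' h
        · exact hadj.ne h.symm
      obtain ⟨T', v, hv, hvu, k, hk, hc', hF⟩ := ih hp.1 hb hup.2 (insert a' T)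
        (hST.trans (Finset.subset_insert _ _)) (Finset.mem_insert_self _ _) ha'
        (conn_insert G T a a' haT hadj hconn) (by
          intro x hx hxT
          rcases Finset.mem_insert.1 hxT with h | h
          · exact Or.inr h
          · rcases hsup x (Or.inr hx) h with h | h
            · exact Or.inl h
            · subst h; exact absurd hx hp.2)
      refine ⟨T', v, hv, hvu, k+1, ?_, hc', hF.trans (F_step G q (k+1) T a v a' haT ha'T (hST hv) hadj)⟩
      rw [hk, Finset.card_insert_of_notMem ha'T]; omega

lemma exists_ear (G : SimpleGraph V) (hG : TwoConnected G) (q : ℕ) (S : Finset V)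
    (hS2 : 2 ≤ S.card) (hne : S ≠ Finset.univ) (hconn : Conn G S) :
    ∃ T' : Finset V, ∃ u ∈ S, ∃ v ∈ S, u ≠ v ∧ ∃ k, T'.card = S.card + (k + 1) ∧ Conn G T' ∧
      (C G q T').card ≤ F G q (k+2) S u v := by
  obtain ⟨s, hs⟩ : S.Nonempty := Finset.card_pos.1 (by omega)
  obtain ⟨t, ht⟩ : ∃ t, t ∉ S := by
    by_contra h; push Not at h; exact hne (Finset.eq_univ_iff_forall.2 h)
  obtain ⟨p⟩ := hG.2.1.preconnected s t
  obtain ⟨d, _, hd1, hd2⟩ := p.exists_boundary_dart (S : Set V) hs ht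
  set u := d.fst
  set w := d.snd
  have huw : G.Adj u w := d.adj
  simp only [Finset.mem_coe] at hd1 hd2
  obtain ⟨b, hb, hbu⟩ := Finset.exists_mem_ne (by omega : 1 < S.card) u
  obtain ⟨p0⟩ := (hG.2.2 u).preconnected ⟨w, huw.ne'⟩ ⟨b, hbu⟩
  let p1 := p0.bypass
  have hp1 : p1.IsPath := p0.bypass_isPath
  let φ := (SimpleGraph.Embedding.induce (G := G) ({u}ᶜ : Set V)).toHom
  have hφ : Function.Injective φ := (SimpleGraph.Embedding.induce (G := G) ({u}ᶜ : Set V)).injective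
  have hp2 : (p1.map φ).IsPath := Walk.map_isPath_of_injective hφ hp1
  have hup : u ∉ (p1.map φ).support := by
    rw [Walk.support_map]
    intro h
    obtain ⟨x, _, hx⟩ := List.mem_map.1 h
    exact x.2 hx
  obtain ⟨T', v, hv, hvu, k, hk, hc, hF⟩ := ear G q S u (p1.map φ) hp2 hb hup (insert w S)
    (Finset.subset_insert _ _) (Finset.mem_insert_self _ _) hd2
    (conn_insert G S u w hd1 huw hconn) (by
      intro x _ hx
      exact (Finset.mem_insert.1 hx).symm)
  refine ⟨T', u, hd1, v, hv, hvu.symm, k, ?_, hc,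
    hF.trans (F_step G q (k+1) S u v w hd1 hd2 hv huw)⟩
  rw [hk, Finset.card_insert_of_notMem hd2]; omega

/-- arithmetic: `n = j+2`, ear with `k+1` new vertices. -/
lemma arith (q : ℤ) (hq : 2 ≤ q) (j k : ℕ) (N E : ℤ) (hN : N ≤ q^(j+2) + (-1)^(j+2) * q)
    (hE0 : 0 ≤ E) (hE : E ≤ (q+1) * q^j) (hj : j = 0 → E = 0) :
    N * (q^(k+2) - (-1)^(k+2)) + (-1)^(k+2) * (q+1) * E ≤
      (q+1) * (q^(j+2+(k+1)) + (-1)^(j+2+(k+1)) * q) := by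
  have hA : 1 ≤ q^j := one_le_pow₀ (by linarith)
  have hB : 1 ≤ q^k := one_le_pow₀ (by linarith)
  have e1 : (-1:ℤ)^(j+2) = (-1)^j := by ring
  have e2 : (-1:ℤ)^(k+2) = (-1)^k := by ring
  have e3 : (-1:ℤ)^(j+2+(k+1)) = -((-1)^j * (-1)^k) := by ring
  have e4 : q^(j+2) = q^2 * q^j := by ring
  have e5 : q^(k+2) = q^2 * q^k := by ring
  have e6 : q^(j+2+(k+1)) = q^3 * (q^j * q^k) := by ring
  rw [e2, e3, e5, e6]
  rw [e1, e4] at hN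
  have hA4 : j ≠ 0 → q ≤ q^j := fun h => le_self_pow₀ (by linarith) h
  have hB4 : k ≠ 0 → q ≤ q^k := fun h => le_self_pow₀ (by linarith) h
  have hA5 : (-1:ℤ)^j = 1 → j ≠ 0 → q^2 ≤ q^j := by
    intro h h0
    apply pow_le_pow_right₀ (by linarith)
    rcases Nat.lt_or_ge j 2 with h2 | h2
    · have : j = 1 := by omega
      subst this; norm_num at h
    · exact h2
  have hj0 : j = 0 → q^j = 1 ∧ (-1:ℤ)^j = 1 := by rintro rfl; simp
  have hk0 : (-1:ℤ)^k = -1 → q ≤ q^k := by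
    intro h; apply hB4; rintro rfl; norm_num at h
  generalize q^j = A at *
  generalize q^k = B at *
  have hNB : 0 ≤ q^2*B - 1 := by nlinarith
  have hAB : 0 ≤ (A-1)*(B-1) := mul_nonneg (by linarith) (by linarith)
  rcases neg_one_pow_eq_or ℤ k with hk | hk <;> rw [hk] at hk0 ⊢
  · -- even ear
    have h1 := mul_le_mul_of_nonneg_right hN hNB
    by_cases h0 : j = 0
    · obtain ⟨ha, hb⟩ := hj0 h0
      rw [hj h0]; rw [ha, hb] at h1 ⊢
      nlinarith
    · have h2 : (q+1)*E ≤ (q+1)*((q+1)*A) := mul_le_mul_of_nonneg_left hE (by linarith)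
      -- key : q^3AB - (2q+1)A ≥ ε (q^3 B+q^2)
      have key : (-1:ℤ)^j * (q^3*B + q^2) ≤ q^3*(A*B) - (2*q+1)*A := by
        rcases neg_one_pow_eq_or ℤ j with hh | hh
        · have hA2 := hA5 hh h0
          rw [hh]
          have t1 : 0 ≤ (A - q^2) * (q^3*B - (2*q+1)) := by
            apply mul_nonneg (by linarith); nlinarith [mul_nonneg (by positivity : (0:ℤ) ≤ q^3) (by linarith : 0 ≤ B - 1), mul_nonneg (by linarith : 0 ≤ q-2) (by positivity : (0:ℤ) ≤ q^2)]
          have t2 : 0 ≤ q^3 * (q^2-1) * (B-1) := by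
            apply mul_nonneg (mul_nonneg (by positivity) (by nlinarith)) (by linarith)
          have t3 : 0 ≤ q^2 * ((q+1)*(q*(q-1) - 2)) := by
            apply mul_nonneg (by positivity) (mul_nonneg (by linarith) (by nlinarith))
          nlinarith
        · rw [hh]
          have : 0 ≤ A * (q^3*B - (2*q+1)) := by
            apply mul_nonneg (by linarith); nlinarith [mul_nonneg (by positivity : (0:ℤ) ≤ q^3) (by linarith : 0 ≤ B - 1), mul_nonneg (by linarith : 0 ≤ q-2) (by positivity : (0:ℤ) ≤ q^2)]
          have : 0 ≤ q^3*B := by positivity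
          nlinarith [sq_nonneg q]
      nlinarith
  · have hNB' : 0 ≤ q^2*B + 1 := by linarith
    have h1 := mul_le_mul_of_nonneg_right hN hNB'
    have h2 : 0 ≤ (q+1)*E := mul_nonneg (by linarith) hE0
    have hBq := hk0 rfl
    have key : q^2*A + (-1:ℤ)^j * (q^3*B) ≤ q^3*(A*B) + (-1)^j * q^2 := by
      rcases neg_one_pow_eq_or ℤ j with hh | hh <;> rw [hh]
      · have : 0 ≤ q^2 * ((A-1)*(q*B-1)) := by
          apply mul_nonneg (by positivity) (mul_nonneg (by linarith) (by nlinarith))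
        nlinarith
      · have t : 0 ≤ q^2 * (A*(q*B-1)) := by
          apply mul_nonneg (by positivity) (mul_nonneg (by linarith) (by nlinarith))
        have t' : 0 ≤ q^2 * (q*B-1) := by
          apply mul_nonneg (by positivity) (by nlinarith)
        nlinarith
    nlinarith

lemma C_pair_card (G : SimpleGraph V) (q : ℕ) (u v : V) (h : G.Adj u v) :
    (C G q {u, v}).card ≤ (q+1) * q := by
  calc _ ≤ ((Finset.univ : Finset (Fin (q+1))).offDiag).card := by
        apply Finset.card_le_card_of_injOn (fun c => (c u, c v))
        · intro c hc
          simp only [C, Finset.coe_filter, Set.mem_ofPred_eq] at hc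
          simpa using hc.2.1 u (by simp) v (by simp) h
        · intro c hc d hd hcd
          simp only [C, Finset.coe_filter, Set.mem_ofPred_eq, Finset.mem_insert,
            Finset.mem_singleton, not_or] at hc hd
          simp only [Prod.mk.injEq] at hcd
          funext x
          by_cases hx : x = u
          · rw [hx, hcd.1]
          · by_cases hx' : x = v
            · rw [hx', hcd.2]
            · rw [hc.2.2 x ⟨hx, hx'⟩, hd.2.2 x ⟨hx, hx'⟩]
    _ = (q+1) * q := by rw [Finset.offDiag_card]; simp [Nat.add_mul, Nat.mul_add]

def Good (G : SimpleGraph V) (q : ℕ) (S : Finset V) : Prop :=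
  2 ≤ S.card ∧ Conn G S ∧ ((C G q S).card : ℤ) ≤ (q:ℤ)^S.card + (-1)^S.card * q

lemma good_pair (G : SimpleGraph V) (q : ℕ) (u v : V) (h : G.Adj u v) : Good G q {u, v} := by
  have hc : ({u, v} : Finset V).card = 2 := Finset.card_pair h.ne
  refine ⟨hc.ge, ?_, ?_⟩
  · have h0 : Conn G {u} := by
      intro T hT hne hTS
      rcases Finset.subset_singleton_iff.1 hT with h | h
      · simp [h] at hne
      · exact absurd h hTS
    have := conn_insert G {u} u v (by simp) h h0
    rwa [Finset.pair_comm] at this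
  · rw [hc]
    have : ((C G q {u, v}).card : ℤ) ≤ (q+1) * q := by exact_mod_cast C_pair_card G q u v h
    linarith [this]

lemma good_univ (G : SimpleGraph V) (hG : TwoConnected G) (q : ℕ) (hq : 2 ≤ q) :
    Good G q Finset.univ := by
  have hne : (Finset.univ.filter (fun S : Finset V => Good G q S)).Nonempty := by
    have hcard := hG.1
    rw [Nat.card_eq_fintype_card] at hcard
    obtain ⟨s, t, hst⟩ := Fintype.exists_pair_of_one_lt_card (by omega : 1 < Fintype.card V)
    obtain ⟨p⟩ := hG.2.1.preconnected s t
    cases p with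
    | nil => exact absurd rfl hst
    | cons h p => exact ⟨_, Finset.mem_filter.2 ⟨Finset.mem_univ _, good_pair G q _ _ h⟩⟩
  obtain ⟨S, hS, hmax⟩ := Finset.exists_max_image _ Finset.card hne
  have hgood := (Finset.mem_filter.1 hS).2
  by_cases hu : S = Finset.univ
  · rwa [hu] at hgood
  exfalso
  obtain ⟨h2, hconn, hN⟩ := hgood
  obtain ⟨T, u, hu, v, hv, huv, k, hk, hc, hF⟩ := exists_ear G hG q S h2 hu hconn
  obtain ⟨j, hj⟩ : ∃ j, S.card = j + 2 := ⟨S.card - 2, by omega⟩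
  have hT : Good G q T := by
    refine ⟨by omega, hc, ?_⟩
    rw [hj] at hN hk
    rw [hk]
    have hE := E_le G q S u v huv hu hv hconn j hj
    have ha := arith q (by exact_mod_cast hq) j k _ (E G q S u v) hN (by positivity)
      (by exact_mod_cast hE) (by
        intro h0; subst h0
        exact_mod_cast E_zero G q S u v huv hu hv hconn hj)
    rw [← F_formula] at ha
    have hpos : (0:ℤ) < q + 1 := by positivity
    have := le_of_mul_le_mul_left ha hpos
    exact le_trans (by exact_mod_cast hF) this
  have := hmax T (Finset.mem_filter.2 ⟨Finset.mem_univ _, hT⟩)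
  omega

end Ear

theorem stmt_5 {V : Type} [Fintype V] (G : SimpleGraph V) (hG : TwoConnected G)
    (n : ℕ) (hn : Fintype.card V = n) (hn3 : 3 ≤ n) (m : ℕ) (hm : 3 ≤ m) :
    (numColorings G m : ℤ) ≤ ((m : ℤ) - 1) ^ n + (-1 : ℤ) ^ n * ((m : ℤ) - 1) := by
  classical
  obtain ⟨q, rfl⟩ : ∃ q, m = q + 1 := ⟨m - 1, by omega⟩
  obtain ⟨_, _, h⟩ := Ear.good_univ G hG q (by omega)
  rw [Finset.card_univ, hn] at h
  have : numColorings G (q+1) = (Ear.C G q Finset.univ).card := by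
    unfold numColorings Ear.C
    rw [Nat.card_eq_fintype_card, Fintype.card_subtype]
    congr 1
    ext c
    simp
  rw [this]
  push_cast
  simpa using h
end

section
/- Let G be a connected graph with n vertices. Then for all m ∈ ℕ, P_DP(G,m) ≤ m(m-1)^{n-1}, with equality for m ≥ 2 if and only if G is a tree. -/
open SimpleGraph

theorem tree_lb (k : ℕ) (n : ℕ) : ∀ {V : Type} [Fintype V] (G : SimpleGraph V) (_ : G.IsTree)
    (R : V → V → Fin (k+1) → Fin (k+1) → Prop)
    (_ : ∀ u v x y, R u v x y → R v u y x)
    (_ : ∀ u v, G.Adj u v → ∀ x y z, R u v x y → R u v x z → y = z)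
    (_ : Fintype.card V = n + 1),
    (k+1) * k^n ≤ Nat.card {c : V → Fin (k+1) // ∀ u v, G.Adj u v → ¬ R u v (c u) (c v)} := by
  classical
  induction n with
  | zero =>
    intro V _ G hT R hs hR hc
    have hsub : Subsingleton V := Fintype.card_le_one_iff_subsingleton.mp (by omega)
    have : Nonempty V := Fintype.card_pos_iff.mp (by omega)
    obtain ⟨v⟩ := this
    have hinj : Function.Injective (fun j : Fin (k+1) =>
        (⟨fun _ => j, fun u v h => absurd (Subsingleton.elim u v) h.ne⟩ :
          {c : V → Fin (k+1) // ∀ u v, G.Adj u v → ¬ R u v (c u) (c v)})) := by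
      intro a b h
      have := congrArg Subtype.val h
      exact congrFun this v
    have := Nat.card_le_card_of_injective _ hinj
    simpa using this
  | succ n ih =>
    intro V _ G hT R hs hR hc
    have hnt : Nontrivial V := Fintype.one_lt_card_iff_nontrivial.mp (by omega)
    obtain ⟨v, hv⟩ := hT.exists_vert_degree_one_of_nontrivial
    have hT' : (G.induce ({v}ᶜ : Set V)).IsTree :=
      ⟨hT.connected.induce_compl_singleton_of_degree_eq_one hv, hT.isAcyclic.induce _⟩
    obtain ⟨w, hw, hwu⟩ := degree_eq_one_iff_existsUnique_adj.mp hv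
    have hwv : w ≠ v := hw.ne'
    have hcard : Fintype.card ({v}ᶜ : Set V) = n + 1 := by
      rw [Fintype.card_compl_set]; simp [hc]
    have key := ih (G.induce ({v}ᶜ : Set V)) hT' (fun a b => R a b)
      (fun u v x y h => hs _ _ _ _ h) (fun u v h => hR _ _ h) hcard
    have hy : ∀ x, ∃ y0, ∀ y, R w v x y → y = y0 := by
      intro x
      by_cases h : ∃ y, R w v x y
      · obtain ⟨y, hy⟩ := h
        exact ⟨y, fun z hz => hR w v hw.symm x z y hz hy⟩
      · exact ⟨0, fun z hz => absurd ⟨z, hz⟩ h⟩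
    choose y0 hy0 using hy
    set A := {c : ({v}ᶜ : Set V) → Fin (k+1) //
      ∀ a b, (G.induce ({v}ᶜ : Set V)).Adj a b → ¬ R a b (c a) (c b)} with hA
    let w' : ({v}ᶜ : Set V) := ⟨w, hwv⟩
    let F : A × Fin k → V → Fin (k+1) := fun p u =>
      if h : u = v then (y0 (p.1.1 w')).succAbove p.2 else p.1.1 ⟨u, h⟩
    have hF : ∀ p, ∀ a b, G.Adj a b → ¬ R a b (F p a) (F p b) := by
      have h1 : ∀ p, ¬ R w v (F p w) (F p v) := by
        intro p hr
        have := hy0 _ _ hr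
        simp only [F, hwv, dif_pos, dif_neg, not_false_eq_true] at this
        exact Fin.succAbove_ne _ _ this
      intro p a b hab hr
      by_cases ha : a = v
      · subst ha
        have := hwu b hab
        subst this
        exact h1 p (hs _ _ _ _ hr)
      · by_cases hb : b = v
        · subst hb
          have := hwu a hab.symm
          subst this
          exact h1 p hr
        · simp only [F, ha, hb, dif_neg, not_false_eq_true] at hr
          exact p.1.2 ⟨a, ha⟩ ⟨b, hb⟩ hab hr
    have hinj : Function.Injective (fun p => (⟨F p, hF p⟩ :
          {c : V → Fin (k+1) // ∀ u v, G.Adj u v → ¬ R u v (c u) (c v)})) := by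
      intro p q h
      have h : F p = F q := congrArg Subtype.val h
      have e1 : p.1 = q.1 := by
        apply Subtype.ext
        funext ⟨u, hu⟩
        have := congrFun h u
        have hu' : u ≠ v := hu
        simpa only [F, hu', dif_neg, not_false_eq_true] using this
      have e2 : p.2 = q.2 := by
        have := congrFun h v
        simp only [F, dif_pos, e1] at this
        exact Fin.succAbove_right_injective this
      exact Prod.ext e1 e2
    have := Nat.card_le_card_of_injective _ hinj
    rw [Nat.card_prod, Nat.card_fin] at this
    calc (k+1) * k^(n+1) = ((k+1) * k^n) * k := by ring
      _ ≤ _ := Nat.mul_le_mul_right _ key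
      _ ≤ _ := this

theorem cover_lb {V : Type} [Fintype V] {G : SimpleGraph V} (hT : G.IsTree) (k n : ℕ)
    (hc : Fintype.card V = n + 1) (C : DPCover G (k+1)) : (k+1) * k^n ≤ C.count := by
  classical
  have hfin : ∀ v, Finite (C.L v) := fun v =>
    Nat.finite_of_card_ne_zero (by rw [C.fold v]; omega)
  let e : ∀ v, C.L v ≃ Fin (k+1) := fun v => Finite.equivFinOfCardEq (C.fold v)
  have key := tree_lb k n G hT
    (fun u v x y => C.H.Adj ((e u).symm x) ((e v).symm y))
    (fun u v x y h => h.symm)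
    (fun u v h x y z h1 h2 => by
      have := C.matching u v h _ ((e u).symm x).2 _ ((e v).symm y).2 _ ((e v).symm z).2 h1 h2
      exact (e v).symm.injective (Subtype.ext this)) hc
  refine key.trans ?_
  have hX : Finite C.X := by
    have : Function.Surjective (fun p : (Σ v, C.L v) => (p.2 : C.X)) := by
      intro x
      obtain ⟨v, hv, _⟩ := C.partition x
      exact ⟨⟨v, x, hv⟩, rfl⟩
    exact Finite.of_surjective _ this
  refine Nat.card_le_card_of_injective (fun c =>
    (⟨fun v => ((e v).symm (c.1 v) : C.X), fun v => ((e v).symm (c.1 v)).2, ?_⟩ :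
      {f : V → C.X // C.IsColoring f})) ?_
  · intro u v huv h
    rcases C.cross u v _ ((e u).symm (c.1 u)).2 _ ((e v).symm (c.1 v)).2 h with h1 | h1
    · exact huv h1
    · exact c.2 u v h1 h
  · intro c d h
    apply Subtype.ext
    funext v
    have := congrFun (congrArg Subtype.val h) v
    exact (e v).symm.injective (Subtype.ext this)

/-- Shift relation along an edge. -/
def ShiftRel {V : Type} (G : SimpleGraph V) (k : ℕ) (o : V → ℕ) (s : G.edgeSet → Fin (k+1))
    (u v : V) (i j : Fin (k+1)) : Prop :=
  ∃ h : G.Adj u v, (o u < o v ∧ j = i + s ⟨s(u, v), h⟩) ∨ (o v < o u ∧ i = j + s ⟨s(u, v), h⟩)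

theorem ShiftRel.symm {V : Type} {G : SimpleGraph V} {k : ℕ} {o : V → ℕ}
    {s : G.edgeSet → Fin (k+1)} {u v : V} {i j : Fin (k+1)} (h : ShiftRel G k o s u v i j) :
    ShiftRel G k o s v u j i := by
  obtain ⟨h, h'⟩ := h
  refine ⟨h.symm, ?_⟩
  have : (⟨s(v, u), h.symm⟩ : G.edgeSet) = ⟨s(u, v), h⟩ := Subtype.ext Sym2.eq_swap
  rw [this]
  exact h'.symm

theorem ShiftRel.unique {V : Type} {G : SimpleGraph V} {k : ℕ} {o : V → ℕ}
    {s : G.edgeSet → Fin (k+1)} {u v : V} {i j l : Fin (k+1)} (h : ShiftRel G k o s u v i j)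
    (h' : ShiftRel G k o s u v i l) : j = l := by
  obtain ⟨h, h1 | h1⟩ := h <;> obtain ⟨h', h2 | h2⟩ := h'
  · rw [h1.2, h2.2]
  · omega
  · omega
  · exact add_right_cancel (h1.2.symm.trans h2.2)

/-- The cover given by shifts. -/
def shiftCover {V : Type} (G : SimpleGraph V) (k : ℕ) (o : V → ℕ) (s : G.edgeSet → Fin (k+1)) :
    DPCover G (k+1) where
  X := V × Fin (k+1)
  H := { Adj := fun x y => (x.1 = y.1 ∧ x.2 ≠ y.2) ∨ ShiftRel G k o s x.1 y.1 x.2 y.2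
         symm := ⟨fun x y h => h.elim (fun h => Or.inl ⟨h.1.symm, h.2.symm⟩) (fun h => Or.inr h.symm)⟩
         loopless := ⟨fun x h => h.elim (fun h => h.2 rfl) (fun h => h.1.ne rfl)⟩ }
  L := fun v => {x | x.1 = v}
  partition := fun x => ⟨x.1, rfl, fun _ h => h.symm⟩
  fold := fun v => by
    have e : {x : V × Fin (k+1) | x.1 = v} ≃ Fin (k+1) :=
      { toFun := fun x => x.1.2
        invFun := fun j => ⟨(v, j), rfl⟩
        left_inv := by rintro ⟨⟨a, b⟩, rfl⟩; rfl
        right_inv := fun _ => rfl }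
    rw [Nat.card_congr e, Nat.card_fin]
  cliques := by
    rintro v ⟨a, i⟩ ha ⟨b, j⟩ hb hne
    obtain rfl : a = v := ha
    obtain rfl : b = a := hb
    exact Or.inl ⟨rfl, fun h => hne (by simpa using h)⟩
  cross := by
    rintro u v ⟨a, i⟩ ha ⟨b, j⟩ hb h
    obtain rfl : a = u := ha
    obtain rfl : b = v := hb
    exact h.elim (fun h => Or.inl h.1) (fun h => Or.inr h.1)
  matching := by
    rintro u v hadj ⟨a, i⟩ ha ⟨b, j⟩ hb ⟨c, l⟩ hc h h'
    obtain rfl : a = u := ha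
    obtain rfl : b = v := hb
    obtain rfl : c = b := hc
    rcases h with h | h
    · exact absurd h.1 hadj.ne
    rcases h' with h' | h'
    · exact absurd h'.1 hadj.ne
    exact Prod.ext rfl (h.unique h')
  matching' := by
    rintro u v hadj ⟨b, j⟩ hb ⟨c, l⟩ hc ⟨a, i⟩ ha h h'
    obtain rfl : a = v := ha
    obtain rfl : b = u := hb
    obtain rfl : c = b := hc
    rcases h with h | h
    · exact absurd h.1 hadj.ne
    rcases h' with h' | h'
    · exact absurd h'.1 hadj.ne
    exact Prod.ext rfl (h.symm.unique h'.symm)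

theorem shiftCover_count {V : Type} [Fintype V] (G : SimpleGraph V) (k : ℕ) (o : V → ℕ)
    (s : G.edgeSet → Fin (k+1)) : (shiftCover G k o s).count ≤
    Nat.card {c : V → Fin (k+1) // ∀ u v, ¬ ShiftRel G k o s u v (c u) (c v)} := by
  refine Nat.card_le_card_of_injective (fun f => ⟨fun v => (f.1 v).2, ?_⟩) ?_
  · intro u v h
    have h1 : ∀ v, (f.1 v).1 = v := f.2.1
    refine f.2.2 u v h.1.ne (Or.inr ?_)
    rw [h1, h1]
    exact h
  · intro f g h
    apply Subtype.ext
    funext v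
    have h1 : (f.1 v).1 = v := f.2.1 v
    have h2 : (g.1 v).1 = v := g.2.1 v
    exact Prod.ext (h1.trans h2.symm) (congrFun (congrArg Subtype.val h) v)

theorem exists_cover {V : Type} [Fintype V] (G : SimpleGraph V) (k : ℕ) :
    ∃ C : DPCover G (k+1), C.count * (k+1)^(Nat.card G.edgeSet) ≤
      (k+1)^(Fintype.card V) * k^(Nat.card G.edgeSet) := by
  classical
  let o : V → ℕ := fun v => Fintype.equivFin V v
  have ho : Function.Injective o := fun a b h => (Fintype.equivFin V).injective (Fin.ext h)
  by_contra! hcon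
  let P : (G.edgeSet → Fin (k+1)) → (V → Fin (k+1)) → Prop := fun s c =>
    ∀ u v, ¬ ShiftRel G k o s u v (c u) (c v)
  have hdc := Finset.sum_card_bipartiteAbove_eq_sum_card_bipartiteBelow
    (s := (Finset.univ : Finset (G.edgeSet → Fin (k+1))))
    (t := (Finset.univ : Finset (V → Fin (k+1)))) P
  have h1 : ∀ s, (shiftCover G k o s).count ≤ (Finset.bipartiteAbove P Finset.univ s).card := by
    intro s
    refine (shiftCover_count G k o s).trans (le_of_eq ?_)
    rw [Nat.card_eq_fintype_card, Fintype.card_subtype]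
    rfl
  have h2 : ∀ c, (Finset.bipartiteBelow P Finset.univ c).card ≤ k ^ (Nat.card G.edgeSet) := by
    intro c
    have hd : ∀ e : G.edgeSet, ∃ d : Fin (k+1), ∀ s, P s c → s e ≠ d := by
      have aux : ∀ u v (h : G.Adj u v), o u < o v → ∀ s, P s c → s ⟨s(u, v), h⟩ ≠ c v - c u := by
        intro u v h hlt s hP hs
        refine hP u v ⟨h, Or.inl ⟨hlt, ?_⟩⟩
        rw [hs]; abel
      rintro ⟨e, he⟩
      induction e using Sym2.ind with
      | _ u v =>
        rcases lt_or_gt_of_ne (ho.ne (G.ne_of_adj he)) with h | h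
        · exact ⟨_, aux u v he h⟩
        · refine ⟨c u - c v, fun s hs => ?_⟩
          have := aux v u he.symm h s hs
          have e' : (⟨s(v, u), he.symm⟩ : G.edgeSet) = ⟨s(u, v), he⟩ := Subtype.ext Sym2.eq_swap
          rwa [e'] at this
    choose d hd using hd
    have hsub : Finset.bipartiteBelow P Finset.univ c ⊆
        Fintype.piFinset (fun e : G.edgeSet => ({d e}ᶜ : Finset (Fin (k+1)))) := by
      intro s hs
      rw [Finset.mem_bipartiteBelow] at hs
      rw [Fintype.mem_piFinset]
      intro e
      simpa using hd e s hs.2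
    refine (Finset.card_le_card hsub).trans (le_of_eq ?_)
    rw [Fintype.card_piFinset]
    simp [Finset.card_compl, Nat.card_eq_fintype_card]
  set E := Nat.card G.edgeSet with hE
  have hcardS : (Finset.univ : Finset (G.edgeSet → Fin (k+1))).card = (k+1)^E := by
    simp [hE]
  have hcardC : (Finset.univ : Finset (V → Fin (k+1))).card = (k+1)^(Fintype.card V) := by
    simp
  have hle : ∑ s, (shiftCover G k o s).count ≤ (k+1)^(Fintype.card V) * k^E := by
    calc _ ≤ ∑ s, (Finset.bipartiteAbove P Finset.univ s).card := Finset.sum_le_sum fun s _ => h1 s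
      _ = _ := hdc
      _ ≤ ∑ c : V → Fin (k+1), k^E := Finset.sum_le_sum fun c _ => h2 c
      _ = _ := by rw [Finset.sum_const, hcardC, smul_eq_mul]
  have hlt : ∑ s : G.edgeSet → Fin (k+1), (k+1)^(Fintype.card V) * k^E <
      ∑ s, (shiftCover G k o s).count * (k+1)^E :=
    Finset.sum_lt_sum_of_nonempty ⟨fun _ => 0, Finset.mem_univ _⟩ fun s _ => hcon _
  rw [Finset.sum_const, hcardS, smul_eq_mul, ← Finset.sum_mul, mul_comm] at hlt
  exact absurd (Nat.mul_le_mul_right ((k+1)^E) hle) (not_le.mpr hlt)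

theorem PDP_le {V : Type} {G : SimpleGraph V} {m : ℕ} (C : DPCover G m) : PDP G m ≤ C.count :=
  Nat.sInf_le ⟨C, rfl⟩

theorem PDP_zero {V : Type} [Nonempty V] (G : SimpleGraph V) : PDP G 0 = 0 := by
  let C : DPCover G 0 :=
    { X := Empty
      H := ⊥
      L := fun _ => ∅
      partition := fun x => x.elim
      fold := fun v => by simp
      cliques := fun _ x => x.elim
      cross := fun _ _ x => x.elim
      matching := fun _ _ _ x => x.elim
      matching' := fun _ _ _ x => x.elim }
  have hC : C.count = 0 := by
    have : IsEmpty {f : V → C.X // C.IsColoring f} :=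
      ⟨fun f => (f.1 (Classical.arbitrary V) : Empty).elim⟩
    exact Nat.card_of_isEmpty
  exact Nat.le_zero.mp ((PDP_le C).trans hC.le)

theorem PDP_ub {V : Type} [Fintype V] {G : SimpleGraph V} (k n r : ℕ)
    (hc : Fintype.card V = n + 1) (hE : Nat.card G.edgeSet = n + r) :
    PDP G (k+1) * (k+1)^r ≤ (k+1) * k^n * k^r := by
  obtain ⟨C, hC⟩ := exists_cover G k
  rw [hc, hE] at hC
  have h : C.count * (k+1)^r * (k+1)^n ≤ (k+1) * k^n * k^r * (k+1)^n := by
    calc _ = C.count * (k+1)^(n+r) := by ring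
      _ ≤ _ := hC
      _ = _ := by ring
  exact (Nat.mul_le_mul_right _ (PDP_le C)).trans (Nat.le_of_mul_le_mul_right h (by positivity))

theorem PDP_ub' {V : Type} [Fintype V] {G : SimpleGraph V} (k n r : ℕ)
    (hc : Fintype.card V = n + 1) (hE : Nat.card G.edgeSet = n + r) :
    PDP G (k+1) ≤ (k+1) * k^n := by
  have h := PDP_ub k n r hc hE
  have h2 : (k+1) * k^n * k^r ≤ (k+1) * k^n * (k+1)^r :=
    Nat.mul_le_mul_left _ (Nat.pow_le_pow_left (by omega) _)
  exact Nat.le_of_mul_le_mul_right (h.trans h2) (by positivity)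

theorem stmt_9 {V : Type} [Fintype V] (G : SimpleGraph V) (hG : G.Connected)
    (n : ℕ) (hn : Fintype.card V = n) :
    (∀ m : ℕ, (PDP G m : ℤ) ≤ (m : ℤ) * ((m : ℤ) - 1) ^ (n - 1)) ∧
    (∀ m : ℕ, 2 ≤ m →
      ((PDP G m : ℤ) = (m : ℤ) * ((m : ℤ) - 1) ^ (n - 1) ↔ G.IsTree)) := by
  have hne : Nonempty V := hG.nonempty
  have hpos : 0 < Fintype.card V := Fintype.card_pos
  obtain ⟨n, rfl⟩ : ∃ j, n = j + 1 := ⟨n - 1, by omega⟩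
  obtain ⟨r, hr⟩ : ∃ r, Nat.card G.edgeSet = n + r := by
    have := hG.card_vert_le_card_edgeSet_add_one
    rw [Nat.card_eq_fintype_card (α := V)] at this
    exact ⟨Nat.card G.edgeSet - n, by omega⟩
  constructor
  · intro m
    rcases m with _ | k
    · simp [PDP_zero]
    · have := PDP_ub' k n r hn hr
      simp only [Nat.add_sub_cancel]
      push_cast
      rw [add_sub_cancel_right]
      exact_mod_cast this
  · intro m hm
    obtain ⟨k, rfl⟩ : ∃ k, m = k + 1 := ⟨m - 1, by omega⟩
    have hk : 1 ≤ k := by omega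
    have hiff : ((PDP G (k+1) : ℤ) = ((k+1 : ℕ) : ℤ) * (((k+1 : ℕ) : ℤ) - 1) ^ (n + 1 - 1)) ↔
        PDP G (k+1) = (k+1) * k^n := by
      simp only [Nat.add_sub_cancel]
      push_cast
      rw [add_sub_cancel_right]
      exact_mod_cast Iff.rfl
    rw [hiff]
    constructor
    · intro h
      rw [isTree_iff_connected_and_card]
      refine ⟨hG, ?_⟩
      rw [Nat.card_eq_fintype_card (α := V), hn, hr]
      by_contra hr0
      have hr0 : r ≠ 0 := by omega
      have h1 := PDP_ub k n r hn hr
      rw [h] at h1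
      have h2 := Nat.le_of_mul_le_mul_left h1 (by positivity)
      exact absurd h2 (not_le.mpr (Nat.pow_lt_pow_left (by omega) hr0))
    · intro hT
      refine le_antisymm (PDP_ub' k n r hn hr) ?_
      obtain ⟨C0, _⟩ := exists_cover G k
      obtain ⟨C, hC⟩ := Nat.sInf_mem (s := {n : ℕ | ∃ C : DPCover G (k+1), C.count = n}) ⟨_, C0, rfl⟩
      have := cover_lb hT k n hn C
      rw [hC] at this
      exact this
end
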